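/- Let R = F2[x,y,z]/(xy + xz + yz). The F2-linear map F2[x,z] × F2[y,z] → R sending a pair of two-variable polynomials (f, g) to the image in R of f(x,z) + y·g(y,z) is a bijection; that is, R decomposes as an F2-vector space as F2[x,z] ⊕ y·F2[y,z]. -/

import Mathlib

/-!
STATEMENT 1: Let `R = F2[x,y,z]/(xy + xz + yz)`.  The `F2`-linear map
`F2[x,z] × F2[y,z] → R` sending `(f, g)` to the image in `R` of `f(x,z) + y·g(y,z)`
is a bijection; that is, `R ≅ F2[x,z] ⊕ y·F2[y,z]` as `F2`-vector spaces.
-/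

noncomputable section

open MvPolynomial

/-- The field with two elements. -/
abbrev F2 : Type := ZMod 2

/-- The polynomial ring `F2[x,y,z]`, with `x = X 0`, `y = X 1`, `z = X 2`. -/
abbrev P3 : Type := MvPolynomial (Fin 3) F2

/-- The relation `xy + xz + yz`. -/
def relP : P3 := X 0 * X 1 + X 0 * X 2 + X 1 * X 2

/-- The ring `R = F2[x,y,z]/(xy + xz + yz)`. -/
abbrev Rring : Type := P3 ⧸ Ideal.span {relP}

/-- The quotient map `F2[x,y,z] → R`. -/
def pr : P3 →ₐ[F2] Rring := Ideal.Quotient.mkₐ F2 (Ideal.span {relP})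

/-- Polynomials in two variables over `F2`. -/
abbrev P2 : Type := MvPolynomial (Fin 2) F2

/-!
For a lexicographic order with `x > y > z` the relation `xy + xz + yz` is monic with leading
monomial `xy`. Division with remainder shows that the monomials not divisible by `xy` span the
quotient, and they are independent there because the leading monomial of a nonzero multiple of the
relation is itself divisible by `xy`. Such a monomial either contains no `y`, so it is a monomial of
`f(x,z)`, or contains `y` but no `x`, so it is a monomial of `y·g(y,z)`.
-/

section StandardMonomials

variable {σ k : Type*} [CommRing k]

theorem coe_basisRestrictSupport_apply (s : Set (σ →₀ ℕ)) (c : s) :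
    (basisRestrictSupport k s c : MvPolynomial σ k) = monomial c 1 :=
  congrArg AddMonoidAlgebra.ofCoeff (Finsupp.supportedEquivFinsupp_symm_single s c (1 : k))

variable (m : MonomialOrder σ) {b : MvPolynomial σ k}

theorem isCompl_span_singleton_restrictSupport (hb : IsUnit (m.leadingCoeff b)) :
    IsCompl ((Ideal.span {b}).restrictScalars k) (restrictSupport k {c | ¬ m.degree b ≤ c}) := by
  constructor
  · rw [Submodule.disjoint_def]
    intro p hp hsupp
    obtain ⟨q, rfl⟩ := Ideal.mem_span_singleton'.mp hp
    by_contra hqb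
    have hdeg : m.degree (q * b) = m.degree q + m.degree b :=
      m.degree_mul_of_isRegular_right (left_ne_zero_of_mul hqb) hb.isRegular
    have hlead : ¬ m.degree b ≤ m.degree (q * b) := hsupp (m.degree_mem_support hqb)
    exact hlead (hdeg ▸ le_add_self)
  · rw [Submodule.codisjoint_iff_exists_add_eq]
    intro p
    obtain ⟨q, r, hp, -, hr⟩ := m.div_single hb p
    exact ⟨q * b, r, Ideal.mul_mem_left _ _ (Ideal.mem_span_singleton_self b), hr, hp.symm⟩

/-- The basis of `k[σ]/(b)` formed by the classes of the standard monomials of `b`: the monomials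
not divisible by its leading monomial. -/
def standardMonomialBasis (hb : IsUnit (m.leadingCoeff b)) :
    Module.Basis {c | ¬ m.degree b ≤ c} k (MvPolynomial σ k ⧸ Ideal.span {b}) :=
  (basisRestrictSupport k {c | ¬ m.degree b ≤ c}).map <|
    (Submodule.quotientEquivOfIsCompl _ _ (isCompl_span_singleton_restrictSupport m hb)).symm ≪≫ₗ
      Submodule.Quotient.restrictScalarsEquiv k (Ideal.span {b})

theorem standardMonomialBasis_apply (hb : IsUnit (m.leadingCoeff b))
    (c : {c | ¬ m.degree b ≤ c}) :
    standardMonomialBasis m hb c = Ideal.Quotient.mkₐ k (Ideal.span {b}) (monomial c 1) := by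
  rw [← coe_basisRestrictSupport_apply]
  rfl

theorem bijective_of_basis_eq_mk_monomial (hb : IsUnit (m.leadingCoeff b))
    {ι M : Type*} [AddCommGroup M] [Module k M] (B : Module.Basis ι k M)
    {L : M →ₗ[k] MvPolynomial σ k ⧸ Ideal.span {b}} {e : ι → σ →₀ ℕ}
    (hinj : Function.Injective e) (hrange : Set.range e = {c | ¬ m.degree b ≤ c})
    (hL : ∀ i, L (B i) = Ideal.Quotient.mkₐ k (Ideal.span {b}) (monomial (e i) 1)) :
    Function.Bijective L := by
  let e' : ι ≃ {c | ¬ m.degree b ≤ c} := (Equiv.ofInjective e hinj).trans (.setCongr hrange)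
  have hequiv : L = B.equiv (standardMonomialBasis m hb) e' := B.ext fun i => by
    rw [hL, LinearEquiv.coe_coe, Module.Basis.equiv_apply, standardMonomialBasis_apply]
    rfl
  rw [hequiv]
  exact LinearEquiv.bijective _

end StandardMonomials

section LeadingMonomial

open Finsupp MonomialOrder

variable {σ k : Type*} [CommRing k] [Nontrivial k] {m : MonomialOrder σ}

theorem degree_X_mul_X (i j : σ) :
    m.degree (X i * X j : MvPolynomial σ k) = single i 1 + single j 1 := by
  rw [degree_mul_of_mul_leadingCoeff_ne_zero (by simp), degree_X, degree_X]

variable {i j l : σ}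

theorem degree_X_mul_X_add_X_mul_X_lt (hij : single j 1 ≺[m] single i 1)
    (hjl : single l 1 ≺[m] single j 1) :
    m.degree (X i * X l + X j * X l : MvPolynomial σ k) ≺[m]
      m.degree (X i * X j : MvPolynomial σ k) := by
  refine degree_add_le.trans_lt (max_lt ?_ ?_) <;> simp only [degree_X_mul_X, map_add]
  · gcongr
  · rw [add_comm]
    gcongr
    exact hjl.trans hij

theorem degree_sum_X_mul_X (hij : single j 1 ≺[m] single i 1)
    (hjl : single l 1 ≺[m] single j 1) :
    m.degree (X i * X j + X i * X l + X j * X l : MvPolynomial σ k) = single i 1 + single j 1 := by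
  rw [add_assoc, degree_add_of_lt (degree_X_mul_X_add_X_mul_X_lt hij hjl), degree_X_mul_X]

theorem monic_sum_X_mul_X (hij : single j 1 ≺[m] single i 1)
    (hjl : single l 1 ≺[m] single j 1) :
    m.Monic (X i * X j + X i * X l + X j * X l : MvPolynomial σ k) := by
  rw [add_assoc]
  exact (Monic.mul leadingCoeff_X leadingCoeff_X).add_of_lt (degree_X_mul_X_add_X_mul_X_lt hij hjl)

end LeadingMonomial

section Exponents

open Finsupp

theorem mapDomain_zero_two_apply (s : Fin 2 →₀ ℕ) (i : Fin 3) :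
    mapDomain ![0, 2] s i = ![s 0, 0, s 1] i := by
  fin_cases i <;> simp [mapDomain, Finsupp.sum_fintype]

theorem mapDomain_one_two_apply (s : Fin 2 →₀ ℕ) (i : Fin 3) :
    mapDomain ![1, 2] s i = ![0, s 0, s 1] i := by
  fin_cases i <;> simp [mapDomain, Finsupp.sum_fintype]

/-- The exponents of the monomials of `f(x,z)` (left summand) and of `y·g(y,z)` (right summand),
as a function of the exponents of `f` and `g`. -/
def decompositionExponent : (Fin 2 →₀ ℕ) ⊕ (Fin 2 →₀ ℕ) → Fin 3 →₀ ℕ :=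
  Sum.elim (mapDomain ![0, 2]) fun s => single 1 1 + mapDomain ![1, 2] s

theorem decompositionExponent_injective : Function.Injective decompositionExponent := by
  refine Function.Injective.sumElim ?_ ?_ ?_
  · exact mapDomain_injective (by decide)
  · exact (add_right_injective _).comp (mapDomain_injective (by decide))
  · intro s t h
    have hy : 0 = 1 + t 0 := by
      simpa [mapDomain_zero_two_apply, mapDomain_one_two_apply] using DFunLike.congr_fun h 1
    omega

theorem single_zero_add_single_one_le_iff (c : Fin 3 →₀ ℕ) :
    single 0 1 + single 1 1 ≤ c ↔ c 0 ≠ 0 ∧ c 1 ≠ 0 := by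
  simp [Finsupp.le_def, Fin.forall_fin_succ, Nat.one_le_iff_ne_zero]

theorem range_decompositionExponent :
    Set.range decompositionExponent = {c | ¬ single 0 1 + single 1 1 ≤ c} := by
  ext c
  rw [Set.mem_ofPred_eq, single_zero_add_single_one_le_iff, not_and_not_right]
  constructor
  · rintro ⟨s | s, rfl⟩ <;>
      simp [decompositionExponent, mapDomain_zero_two_apply, mapDomain_one_two_apply]
  · intro hc
    by_cases hy : c 1 = 0
    · refine ⟨.inl (equivFunOnFinite.symm ![c 0, c 2]), Finsupp.ext fun i => ?_⟩
      fin_cases i <;> simp [decompositionExponent, mapDomain_zero_two_apply, hy]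
    · have hx : c 0 = 0 := by_contra fun hx => hy (hc hx)
      have hy_pred : 1 + (c 1 - 1) = c 1 := by omega
      refine ⟨.inr (equivFunOnFinite.symm ![c 1 - 1, c 2]), Finsupp.ext fun i => ?_⟩
      fin_cases i <;> simp [decompositionExponent, mapDomain_one_two_apply, hx, hy_pred]

end Exponents

section Decomposition

open scoped MonomialOrder

variable {k : Type*} [CommRing k]

theorem aeval_X_X_eq_rename {τ : Type*} (i j : τ) :
    (aeval ![X i, X j] : MvPolynomial (Fin 2) k →ₐ[k] MvPolynomial τ k) = rename ![i, j] := by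
  ext1 l
  fin_cases l <;> simp

variable (k)

/-- The map `(f, g) ↦ f(x,z) + y·g(y,z)` before passing to the quotient, with `x`, `y`, `z` the
variables `X 0`, `X 1`, `X 2`. -/
def decompositionMap :
    MvPolynomial (Fin 2) k × MvPolynomial (Fin 2) k →ₗ[k] MvPolynomial (Fin 3) k :=
  (aeval ![X 0, X 2]).toLinearMap.coprod
    (LinearMap.mulLeft k (X 1) ∘ₗ (aeval ![X 1, X 2]).toLinearMap)

theorem decompositionMap_apply (f g : MvPolynomial (Fin 2) k) :
    decompositionMap k (f, g) = aeval ![X 0, X 2] f + X 1 * aeval ![X 1, X 2] g :=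
  rfl

theorem decompositionMap_basisMonomials (i : (Fin 2 →₀ ℕ) ⊕ (Fin 2 →₀ ℕ)) :
    decompositionMap k ((basisMonomials (Fin 2) k).prod (basisMonomials (Fin 2) k) i) =
      monomial (decompositionExponent i) 1 := by
  rcases i with s | s
  · simp [decompositionMap_apply, decompositionExponent, -aeval_eq_bind₁, aeval_X_X_eq_rename,
      rename_monomial]
  · simp [decompositionMap_apply, decompositionExponent, -aeval_eq_bind₁, aeval_X_X_eq_rename,
      rename_monomial, monomial_single_add]

theorem decomposition_linear_map_bijective_general :
    ∃ L : MvPolynomial (Fin 2) k × MvPolynomial (Fin 2) k →ₗ[k] MvPolynomial (Fin 3) k ⧸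
        Ideal.span {(X 0 * X 1 + X 0 * X 2 + X 1 * X 2 : MvPolynomial (Fin 3) k)},
      (∀ f g, L (f, g) =
        Ideal.Quotient.mkₐ k _ (aeval ![X 0, X 2] f + X 1 * aeval ![X 1, X 2] g)) ∧
      Function.Bijective L := by
  refine ⟨(Ideal.Quotient.mkₐ k _).toLinearMap ∘ₗ decompositionMap k, fun f g => rfl, ?_⟩
  rcases subsingleton_or_nontrivial k with hk | hk
  · exact ⟨Function.injective_of_subsingleton _, Function.surjective_to_subsingleton _⟩
  · have hxy : Finsupp.single (1 : Fin 3) 1 ≺[MonomialOrder.lex] Finsupp.single 0 1 :=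
      Finsupp.Lex.single_lt_iff.mpr (by decide)
    have hyz : Finsupp.single (2 : Fin 3) 1 ≺[MonomialOrder.lex] Finsupp.single 1 1 :=
      Finsupp.Lex.single_lt_iff.mpr (by decide)
    refine bijective_of_basis_eq_mk_monomial .lex ?_
      ((basisMonomials (Fin 2) k).prod (basisMonomials (Fin 2) k))
      decompositionExponent_injective ?_ fun i => ?_
    · rw [(monic_sum_X_mul_X hxy hyz).leadingCoeff_eq_one]
      exact isUnit_one
    · rw [range_decompositionExponent, degree_sum_X_mul_X hxy hyz]
    · exact congrArg _ (decompositionMap_basisMonomials k i)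

end Decomposition

/-- The `F2`-linear map `F2[x,z] × F2[y,z] → R`, `(f, g) ↦ f(x,z) + y·g(y,z)`,
is a bijection: `R = F2[x,z] ⊕ y·F2[y,z]` as an `F2`-vector space. -/
theorem decomposition_linear_map_bijective :
    ∃ L : (P2 × P2) →ₗ[F2] Rring,
      (∀ f g : P2,
        L (f, g) = pr (aeval ![X 0, X 2] f + X 1 * aeval ![X 1, X 2] g)) ∧
      Function.Bijective L :=
  decomposition_linear_map_bijective_general F2

end
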